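/- Let (x,v) : ℝ → ℝ³ × ℝ³ be a global C¹ solution of the repulsive Kepler ODE with x(t) ≠ 0 for all t, and let H be its conserved energy. Then the asymptotic velocities v₊∞ := lim_{t→+∞} v(t) and v₋∞ := lim_{t→−∞} v(t) exist, satisfy |v₊∞|² = |v₋∞|² = H > 0, and moreover x(t)/t → v₊∞ as t → +∞ and x(t)/t → v₋∞ as t → −∞. -/

import Mathlib

open scoped RealInnerProductSpace

noncomputable section

/-- Euclidean three-space. -/
abbrev R3 : Type := EuclideanSpace ℝ (Fin 3)

/-- The energy `H(x,v) = |v|² + q/|x|` of the repulsive Kepler problem. -/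
def keplerH (q : ℝ) (x v : R3) : ℝ := ‖v‖ ^ 2 + q / ‖x‖

/-!
In terms of the energy `H`, the virial identity reads `d/dt ⟪x, v⟫ = (|v|² + H) / 2`, and hence
`d²/dt² |x|² ≥ H` whatever the sign of `q`. When `H > 0`, `|x|` therefore grows at least linearly,
the acceleration is `O(t⁻²)`, and the velocity converges. Since `q/|x| → 0`, conservation of energy
gives the speed of the limit, and integrating the velocity gives the limit of `x(t)/t`. Time
reversal exchanges the two ends of the trajectory.
-/

open Filter Topology Set MeasureTheory Asymptotics
open scoped Pointwise

section Calculus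

variable {F : Type*} [NormedAddCommGroup F] [NormedSpace ℝ F] {f f' : ℝ → F}

theorem isLittleO_id_atTop_of_tendsto_deriv_zero (hf : ∀ᶠ t in atTop, HasDerivAt f (f' t) t)
    (hf' : Tendsto f' atTop (𝓝 0)) : f =o[atTop] (id : ℝ → ℝ) := by
  refine isLittleO_iff.2 fun c hc ↦ ?_
  have hsmall : ∀ᶠ t in atTop, ‖f' t‖ < c / 2 :=
    NormedAddGroup.tendsto_nhds_zero.1 hf' _ (half_pos hc)
  obtain ⟨T, hT⟩ := eventually_atTop.1 ((hf.and hsmall).and (eventually_ge_atTop 0))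
  filter_upwards [eventually_ge_atTop T, eventually_ge_atTop (‖f T‖ / (c / 2))] with t hTt ht
  have hT0 : 0 ≤ T := (hT T le_rfl).2
  have hmean : ‖f t - f T‖ ≤ c / 2 * ‖t - T‖ :=
    (convex_Ici T).norm_image_sub_le_of_norm_hasDerivWithin_le
      (fun s hs ↦ (hT s hs).1.1.hasDerivWithinAt) (fun s hs ↦ (hT s hs).1.2.le)
      self_mem_Ici hTt
  calc ‖f t‖ ≤ ‖f T‖ + ‖f t - f T‖ := norm_le_norm_add_norm_sub' _ _
    _ ≤ c / 2 * t + c / 2 * t := by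
      rw [Real.norm_of_nonneg (sub_nonneg.2 hTt)] at hmean
      gcongr
      · exact (div_le_iff₀' (half_pos hc)).1 ht
      · exact hmean.trans (by gcongr; exact sub_le_self t hT0)
    _ = c * ‖id t‖ := by
      rw [id, Real.norm_of_nonneg (hT0.trans hTt)]
      ring

theorem tendsto_inv_smul_atTop_of_tendsto_deriv {l : F}
    (hf : ∀ᶠ t in atTop, HasDerivAt f (f' t) t) (hf' : Tendsto f' atTop (𝓝 l)) :
    Tendsto (fun t : ℝ ↦ t⁻¹ • f t) atTop (𝓝 l) := by
  have hsub : ∀ᶠ t in atTop, HasDerivAt (fun t ↦ f t - t • l) (f' t - l) t :=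
    hf.mono fun t ht ↦
      (ht.sub ((hasDerivAt_id t).smul_const l)).congr_deriv (by rw [one_smul])
  have hlim : Tendsto (fun t : ℝ ↦ t⁻¹ • (f t - t • l) + l) atTop (𝓝 (0 + l)) :=
    ((isLittleO_id_atTop_of_tendsto_deriv_zero hsub
      (tendsto_sub_nhds_zero_iff.2 hf')).tendsto_inv_smul_nhds_zero).add_const l
  rw [zero_add] at hlim
  refine hlim.congr' ?_
  filter_upwards [eventually_ne_atTop 0] with t ht
  rw [smul_sub, inv_smul_smul₀ ht, sub_add_cancel]

theorem exists_tendsto_atTop_of_deriv_isBigO_rpow [CompleteSpace F] {a s : ℝ}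
    (hf : ∀ t ∈ Ici a, HasDerivAt f (f' t) t) (hcont : ContinuousOn f' (Ici a)) (hs : s < -1)
    (hO : f' =O[atTop] fun t : ℝ ↦ t ^ s) : ∃ l, Tendsto f atTop (𝓝 l) := by
  have hint : IntegrableOn f' (Ici a) :=
    (hcont.locallyIntegrableOn measurableSet_Ici).integrableOn_of_isBigO_atTop hO
      (integrableAtFilter_rpow_atTop_iff.2 hs)
  exact ⟨_, tendsto_limUnder_of_hasDerivAt_of_integrableOn_Ioi
    (fun t ht ↦ hf t (Ioi_subset_Ici_self ht)) (hint.mono_set Ioi_subset_Ici_self)⟩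

end Calculus

section SecondDerivative

variable {f f' f'' : ℝ → ℝ} {a c : ℝ}

theorem quadratic_le_of_le_second_deriv (hf : ∀ t ∈ Ici a, HasDerivAt f (f' t) t)
    (hf' : ∀ t ∈ Ici a, HasDerivAt f' (f'' t) t) (hc : ∀ t ∈ Ici a, c ≤ f'' t)
    {t : ℝ} (ht : a ≤ t) : f a + f' a * (t - a) + c / 2 * (t - a) ^ 2 ≤ f t := by
  have hlin : MonotoneOn (fun s ↦ f' s - c * (s - a)) (Ici a) := by
    have hderiv : ∀ s ∈ Ici a, HasDerivAt (fun s ↦ f' s - c * (s - a)) (f'' s - c) s :=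
      fun s hs ↦
      ((hf' s hs).sub (((hasDerivAt_id s).sub_const a).const_mul c)).congr_deriv (by rw [mul_one])
    exact monotoneOn_of_hasDerivWithinAt_nonneg (convex_Ici a)
      (fun s hs ↦ (hderiv s hs).continuousAt.continuousWithinAt)
      (fun s hs ↦ (hderiv s (interior_subset hs)).hasDerivWithinAt)
      (fun s hs ↦ sub_nonneg.2 (hc s (interior_subset hs)))
  have hquad : MonotoneOn (fun s ↦ f s - f' a * (s - a) - c / 2 * (s - a) ^ 2) (Ici a) := by
    have hderiv : ∀ s ∈ Ici a, HasDerivAt (fun s ↦ f s - f' a * (s - a) - c / 2 * (s - a) ^ 2)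
        (f' s - f' a - c * (s - a)) s := fun s hs ↦ by
      have hsub := (hasDerivAt_id s).sub_const a
      refine (((hf s hs).sub (hsub.const_mul (f' a))).sub
        ((hsub.pow 2).const_mul (c / 2))).congr_deriv ?_
      simp only [id, Nat.cast_ofNat]
      ring
    refine monotoneOn_of_hasDerivWithinAt_nonneg (convex_Ici a)
      (fun s hs ↦ (hderiv s hs).continuousAt.continuousWithinAt)
      (fun s hs ↦ (hderiv s (interior_subset hs)).hasDerivWithinAt) (fun s hs ↦ ?_)
    have has : a ≤ s := interior_subset hs
    linarith [hlin self_mem_Ici has has]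
  linarith [hquad self_mem_Ici ht ht]

theorem sq_isBigO_atTop_of_quadratic_le {b d : ℝ} (hc : 0 < c)
    (hle : ∀ᶠ t in atTop, d + b * t + c * t ^ 2 ≤ f t) :
    (fun t ↦ t ^ 2) =O[atTop] f := by
  have hlower : (fun t : ℝ ↦ d * t ^ 0 + b * t ^ 1) =o[atTop] fun t ↦ t ^ 2 :=
    ((isLittleO_pow_pow_atTop_of_lt two_pos).const_mul_left d).add
      ((isLittleO_pow_pow_atTop_of_lt one_lt_two).const_mul_left b)
  refine IsBigO.of_bound (c / 2)⁻¹ ?_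
  filter_upwards [hle, hlower.bound (half_pos hc)] with t ht hsmall
  rw [← div_eq_inv_mul, le_div_iff₀' (half_pos hc)]
  simp only [Real.norm_eq_abs, abs_sq, pow_zero, pow_one, mul_one] at hsmall ⊢
  linarith [neg_abs_le (d + b * t), le_abs_self (f t)]

theorem sq_isBigO_atTop_of_le_second_deriv (hf : ∀ t ∈ Ici a, HasDerivAt f (f' t) t)
    (hf' : ∀ t ∈ Ici a, HasDerivAt f' (f'' t) t) (hc : 0 < c) (hle : ∀ t ∈ Ici a, c ≤ f'' t) :
    (fun t ↦ t ^ 2) =O[atTop] f := by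
  refine sq_isBigO_atTop_of_quadratic_le (half_pos hc)
    (d := f a - f' a * a + c / 2 * a ^ 2) (b := f' a - c * a) ?_
  filter_upwards [eventually_ge_atTop a] with t ht
  linarith [quadratic_le_of_le_second_deriv hf hf' hle ht]

end SecondDerivative

section KeplerMotion

variable {E : Type*} [NormedAddCommGroup E]

/-- The energy `|v|² + q/|x|` of the Kepler problem, extending `keplerH` to an arbitrary normed
space. -/
def keplerEnergy (q : ℝ) (x v : E) : ℝ := ‖v‖ ^ 2 + q / ‖x‖

theorem keplerEnergy_pos {q : ℝ} (hq : 0 < q) {x : E} (hx : x ≠ 0) (v : E) :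
    0 < keplerEnergy q x v :=
  add_pos_of_nonneg_of_pos (sq_nonneg _) (div_pos hq (norm_pos_iff.2 hx))

variable [NormedSpace ℝ E]

/-- The Kepler acceleration `(q/2) x/|x|³`; `q > 0` is the repulsive case and `q < 0` the
attractive one. -/
def keplerAccel (q : ℝ) (x : E) : E := (q / 2 / ‖x‖ ^ 3) • x

theorem norm_keplerAccel (q : ℝ) (x : E) : ‖keplerAccel q x‖ = |q| / 2 * (‖x‖ ^ 2)⁻¹ := by
  rcases eq_or_ne x 0 with rfl | hx
  · simp [keplerAccel]
  · have hnorm : ‖x‖ ≠ 0 := norm_ne_zero_iff.2 hx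
    simp only [keplerAccel, norm_smul, norm_div, norm_pow, Real.norm_eq_abs, abs_norm,
      Nat.abs_ofNat]
    field_simp

theorem continuousAt_keplerAccel (q : ℝ) {x : E} (hx : x ≠ 0) :
    ContinuousAt (keplerAccel q) x :=
  (continuousAt_const.div (continuousAt_id.norm.pow 3)
    (pow_ne_zero 3 (norm_ne_zero_iff.2 hx))).smul continuousAt_id

/-- `(x, v)` is a collision-free solution of the Kepler ODE with coupling constant `q` at the times
in `s`. The derivatives are two-sided even at the boundary points of `s`. -/
structure IsKeplerMotionOn (q : ℝ) (x v : ℝ → E) (s : Set ℝ) : Prop where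
  ne_zero : ∀ t ∈ s, x t ≠ 0
  hasDerivAt_position : ∀ t ∈ s, HasDerivAt x (v t) t
  hasDerivAt_velocity : ∀ t ∈ s, HasDerivAt v (keplerAccel q (x t)) t

namespace IsKeplerMotionOn

variable {q : ℝ} {x v : ℝ → E} {s : Set ℝ}

theorem mono {s' : Set ℝ} (h : IsKeplerMotionOn q x v s) (hs : s' ⊆ s) :
    IsKeplerMotionOn q x v s' where
  ne_zero t ht := h.ne_zero t (hs ht)
  hasDerivAt_position t ht := h.hasDerivAt_position t (hs ht)
  hasDerivAt_velocity t ht := h.hasDerivAt_velocity t (hs ht)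

theorem time_reversal (h : IsKeplerMotionOn q x v s) :
    IsKeplerMotionOn q (fun t ↦ x (-t)) (fun t ↦ -v (-t)) (-s) where
  ne_zero t ht := h.ne_zero (-t) ht
  hasDerivAt_position t ht :=
    ((h.hasDerivAt_position (-t) ht).scomp t (hasDerivAt_neg t)).congr_deriv
      (neg_one_smul ℝ _)
  hasDerivAt_velocity t ht :=
    ((h.hasDerivAt_velocity (-t) ht).scomp t (hasDerivAt_neg t)).neg.congr_deriv
      (by rw [neg_one_smul, neg_neg])

end IsKeplerMotionOn

end KeplerMotion

section InnerProductSpace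

variable {E : Type*} [NormedAddCommGroup E] [InnerProductSpace ℝ E]

theorem real_inner_keplerAccel (q : ℝ) (x : E) : ⟪x, keplerAccel q x⟫ = q / 2 / ‖x‖ := by
  rcases eq_or_ne x 0 with rfl | hx
  · simp
  · have hnorm : ‖x‖ ≠ 0 := norm_ne_zero_iff.2 hx
    rw [keplerAccel, real_inner_smul_right, real_inner_self_eq_norm_sq]
    field_simp

theorem hasDerivAt_norm_of_ne_zero {x : ℝ → E} {x' : E} {t : ℝ} (hx : HasDerivAt x x' t)
    (h0 : x t ≠ 0) : HasDerivAt (fun s ↦ ‖x s‖) (⟪x t, x'⟫ / ‖x t‖) t := by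
  have hsqrt := hx.norm_sq.sqrt (pow_ne_zero 2 (norm_ne_zero_iff.2 h0))
  simpa only [Real.sqrt_sq (norm_nonneg _), mul_div_mul_left _ _ (two_ne_zero' ℝ)] using hsqrt

namespace IsKeplerMotionOn

variable {q a : ℝ} {x v : ℝ → E} {s : Set ℝ}

theorem hasDerivAt_keplerEnergy (h : IsKeplerMotionOn q x v s) {t : ℝ} (ht : t ∈ s) :
    HasDerivAt (fun t ↦ keplerEnergy q (x t) (v t)) 0 t := by
  have hnorm : ‖x t‖ ≠ 0 := norm_ne_zero_iff.2 (h.ne_zero t ht)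
  have hkinetic := (h.hasDerivAt_velocity t ht).norm_sq
  have hpotential := ((hasDerivAt_norm_of_ne_zero (h.hasDerivAt_position t ht) (h.ne_zero t ht)).inv
    hnorm).const_mul q
  refine (hkinetic.add hpotential).congr_deriv ?_
  rw [keplerAccel, real_inner_smul_right, real_inner_comm]
  field_simp
  ring

theorem keplerEnergy_eq (h : IsKeplerMotionOn q x v s) (hs : Convex ℝ s) {t u : ℝ} (ht : t ∈ s)
    (hu : u ∈ s) : keplerEnergy q (x t) (v t) = keplerEnergy q (x u) (v u) := by
  have hmean := hs.norm_image_sub_le_of_norm_hasDerivWithin_le (C := 0)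
    (fun r hr ↦ (h.hasDerivAt_keplerEnergy hr).hasDerivWithinAt)
    (fun r _ ↦ norm_zero.le) hu ht
  rwa [zero_mul, norm_le_zero_iff, sub_eq_zero] at hmean

theorem hasDerivAt_inner_position_velocity (h : IsKeplerMotionOn q x v s) {t : ℝ} (ht : t ∈ s) :
    HasDerivAt (fun t ↦ ⟪x t, v t⟫) ((‖v t‖ ^ 2 + keplerEnergy q (x t) (v t)) / 2) t := by
  refine ((h.hasDerivAt_position t ht).inner ℝ (h.hasDerivAt_velocity t ht)).congr_deriv ?_
  rw [real_inner_keplerAccel, real_inner_self_eq_norm_sq, keplerEnergy]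
  ring

theorem id_isBigO_position (h : IsKeplerMotionOn q x v (Ici a))
    (hpos : 0 < keplerEnergy q (x a) (v a)) : (id : ℝ → ℝ) =O[atTop] x := by
  have hsq : (fun t ↦ t ^ 2) =O[atTop] fun t ↦ ‖x t‖ ^ 2 := by
    refine sq_isBigO_atTop_of_le_second_deriv
      (fun t ht ↦ (h.hasDerivAt_position t ht).norm_sq)
      (fun t ht ↦ (h.hasDerivAt_inner_position_velocity ht).const_mul 2) hpos (fun t ht ↦ ?_)
    rw [h.keplerEnergy_eq (convex_Ici a) self_mem_Ici ht]
    linarith [sq_nonneg ‖v t‖]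
  exact isBigO_norm_right.1 (IsBigO.of_pow two_ne_zero hsq)

theorem keplerAccel_isBigO (h : IsKeplerMotionOn q x v (Ici a))
    (hpos : 0 < keplerEnergy q (x a) (v a)) :
    (fun t ↦ keplerAccel q (x t)) =O[atTop] fun t ↦ t ^ (-2 : ℝ) := by
  have haccel : (fun t ↦ keplerAccel q (x t)) =O[atTop] fun t ↦ (‖x t‖ ^ 2)⁻¹ :=
    IsBigO.of_bound (|q| / 2) (.of_forall fun t ↦ by simp [norm_keplerAccel])
  have hinv : (fun t ↦ (‖x t‖ ^ 2)⁻¹) =O[atTop] fun t : ℝ ↦ (t ^ 2)⁻¹ := by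
    refine ((h.id_isBigO_position hpos).norm_right.pow 2).inv_rev ?_
    filter_upwards [eventually_ne_atTop 0] with t ht h0
    exact absurd h0 (pow_ne_zero 2 ht)
  refine (haccel.trans hinv).congr' .rfl ?_
  filter_upwards [eventually_ge_atTop 0] with t ht
  rw [Real.rpow_neg ht, Real.rpow_two]

theorem exists_tendsto_velocity [CompleteSpace E] (h : IsKeplerMotionOn q x v (Ici a))
    (hpos : 0 < keplerEnergy q (x a) (v a)) : ∃ w, Tendsto v atTop (𝓝 w) := by
  have hcont : ContinuousOn (fun t ↦ keplerAccel q (x t)) (Ici a) := fun t ht ↦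
    ((continuousAt_keplerAccel q (h.ne_zero t ht)).comp
      (h.hasDerivAt_position t ht).continuousAt).continuousWithinAt
  exact exists_tendsto_atTop_of_deriv_isBigO_rpow h.hasDerivAt_velocity hcont (by norm_num)
    (h.keplerAccel_isBigO hpos)

theorem norm_sq_eq_keplerEnergy_of_tendsto (h : IsKeplerMotionOn q x v (Ici a))
    (hpos : 0 < keplerEnergy q (x a) (v a)) {w : E} (hw : Tendsto v atTop (𝓝 w)) :
    ‖w‖ ^ 2 = keplerEnergy q (x a) (v a) := by
  have hnorm : Tendsto (fun t ↦ ‖x t‖) atTop atTop := by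
    simpa using (h.id_isBigO_position hpos).norm_right.trans_tendsto_norm_atTop
      tendsto_norm_atTop_atTop
  have henergy : Tendsto (fun t ↦ keplerEnergy q (x t) (v t)) atTop (𝓝 (‖w‖ ^ 2 + 0)) :=
    (hw.norm.pow 2).add (hnorm.const_div_atTop q)
  rw [add_zero] at henergy
  refine tendsto_nhds_unique (henergy.congr' ?_) tendsto_const_nhds
  filter_upwards [eventually_ge_atTop a] with t ht
  exact h.keplerEnergy_eq (convex_Ici a) ht self_mem_Ici

theorem exists_asymptotic_velocity_atTop [CompleteSpace E] (h : IsKeplerMotionOn q x v (Ici a))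
    (hpos : 0 < keplerEnergy q (x a) (v a)) :
    ∃ w, Tendsto v atTop (𝓝 w) ∧ ‖w‖ ^ 2 = keplerEnergy q (x a) (v a) ∧
      Tendsto (fun t : ℝ ↦ t⁻¹ • x t) atTop (𝓝 w) := by
  obtain ⟨w, hw⟩ := h.exists_tendsto_velocity hpos
  exact ⟨w, hw, h.norm_sq_eq_keplerEnergy_of_tendsto hpos hw,
    tendsto_inv_smul_atTop_of_tendsto_deriv
      ((eventually_ge_atTop a).mono h.hasDerivAt_position) hw⟩

theorem exists_asymptotic_velocity_atBot [CompleteSpace E] (h : IsKeplerMotionOn q x v (Iic a))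
    (hpos : 0 < keplerEnergy q (x a) (v a)) :
    ∃ w, Tendsto v atBot (𝓝 w) ∧ ‖w‖ ^ 2 = keplerEnergy q (x a) (v a) ∧
      Tendsto (fun t : ℝ ↦ t⁻¹ • x t) atBot (𝓝 w) := by
  have hrev := h.time_reversal
  rw [neg_Iic] at hrev
  obtain ⟨w, hw, hnorm, hlin⟩ :=
    hrev.exists_asymptotic_velocity_atTop (by simpa [keplerEnergy] using hpos)
  refine ⟨-w, ?_, by simpa [keplerEnergy] using hnorm, ?_⟩
  · simpa [Function.comp_def] using (hw.comp tendsto_neg_atBot_atTop).neg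
  · simpa [Function.comp_def, inv_neg] using (hlin.comp tendsto_neg_atBot_atTop).neg

end IsKeplerMotionOn

theorem kepler_asymptotic_velocities_general [CompleteSpace E] {q t₀ : ℝ} {x v : ℝ → E}
    (h : IsKeplerMotionOn q x v univ) (hpos : 0 < keplerEnergy q (x t₀) (v t₀)) :
    ∃ vp vm : E, Tendsto v atTop (𝓝 vp) ∧ Tendsto v atBot (𝓝 vm) ∧
      ‖vp‖ ^ 2 = keplerEnergy q (x t₀) (v t₀) ∧ ‖vm‖ ^ 2 = keplerEnergy q (x t₀) (v t₀) ∧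
      Tendsto (fun t : ℝ ↦ t⁻¹ • x t) atTop (𝓝 vp) ∧
      Tendsto (fun t : ℝ ↦ t⁻¹ • x t) atBot (𝓝 vm) := by
  obtain ⟨vp, hvp, hnormp, hxp⟩ :=
    (h.mono (subset_univ (Ici t₀))).exists_asymptotic_velocity_atTop hpos
  obtain ⟨vm, hvm, hnormm, hxm⟩ :=
    (h.mono (subset_univ (Iic t₀))).exists_asymptotic_velocity_atBot hpos
  exact ⟨vp, vm, hvp, hvm, hnormp, hnormm, hxp, hxm⟩

end InnerProductSpace

/-- Along a global solution of the repulsive Kepler ODE with conserved energy `H`,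
the asymptotic velocities `v₊∞ = lim_{t→+∞} v(t)` and `v₋∞ = lim_{t→−∞} v(t)` exist,
satisfy `|v₊∞|² = |v₋∞|² = H > 0`, and `x(t)/t → v₊∞` as `t → +∞`,
`x(t)/t → v₋∞` as `t → −∞`. -/
theorem kepler_asymptotic_velocities (q : ℝ) (hq : 0 < q)
    (x v : ℝ → R3) (H : ℝ)
    (hx0 : ∀ t, x t ≠ 0)
    (hx : ∀ t, HasDerivAt x (v t) t)
    (hv : ∀ t, HasDerivAt v ((q / 2 / ‖x t‖ ^ 3) • x t) t)
    (hH : ∀ t, keplerH q (x t) (v t) = H) :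
    ∃ vp vm : R3,
      Filter.Tendsto v Filter.atTop (nhds vp) ∧
      Filter.Tendsto v Filter.atBot (nhds vm) ∧
      ‖vp‖ ^ 2 = H ∧ ‖vm‖ ^ 2 = H ∧ 0 < H ∧
      Filter.Tendsto (fun t : ℝ => t⁻¹ • x t) Filter.atTop (nhds vp) ∧
      Filter.Tendsto (fun t : ℝ => t⁻¹ • x t) Filter.atBot (nhds vm) := by
  obtain rfl : keplerEnergy q (x 0) (v 0) = H := hH 0
  have hpos : 0 < keplerEnergy q (x 0) (v 0) := keplerEnergy_pos hq (hx0 0) (v 0)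
  obtain ⟨vp, vm, hvp, hvm, hnormp, hnormm, hlin⟩ := kepler_asymptotic_velocities_general
    ⟨fun t _ ↦ hx0 t, fun t _ ↦ hx t, fun t _ ↦ hv t⟩ hpos
  exact ⟨vp, vm, hvp, hvm, hnormp, hnormm, hpos, hlin⟩
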